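/- Let 0 < d < n be integers and let E ⊆ ℝ^n be a LARRF set of dimension d with constants ε and C₀, where ε is small enough depending only on n and d. Then for every x ∈ E and 0 < r ≤ 10⁻² there is an (n−d)-dimensional affine plane W through x such that the sphere S = W ∩ ∂B(x,r/2) satisfies dist(z,E) ≥ r/3 for every z ∈ S, and S is linked with E in the following sense: there is no continuous map F : [0,1] × ℝ^n → ℝ^n such that F(t,z) = z whenever t = 0 or z ∈ ℝ^n ∖ B(x,10r), F(1,z) ∈ ℝ^n ∖ B(x,10r) for every z ∈ E, and F(t,z) ∈ ℝ^n ∖ S for every z ∈ E and every t ∈ [0,1]. (Lemma 15.6: LARRF sets are local generalized Semmes surfaces.) -/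

import Mathlib

open Metric Set MeasureTheory
open scoped ENNReal

noncomputable section

set_option synthInstance.maxHeartbeats 1000000
set_option maxHeartbeats 1000000

/-- `ℝⁿ`. -/
abbrev V (n : ℕ) := EuclideanSpace ℝ (Fin n)

/-- `P` is a `d`-dimensional affine plane of `ℝⁿ`. -/
def IsAffinePlane (n d : ℕ) (P : Set (V n)) : Prop :=
  ∃ Q : AffineSubspace ℝ (V n), (Q : Set (V n)) = P ∧
    Module.finrank ℝ Q.direction = d ∧ (Q : Set (V n)).Nonempty

/-- The normalized local Hausdorff distance `d_{x,r}(A,B)`. -/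
def nhd {n : ℕ} (x : V n) (r : ℝ) (A B : Set (V n)) : ℝ :=
  r⁻¹ * max (⨆ y ∈ A ∩ ball x r, infDist y B) (⨆ y ∈ B ∩ ball x r, infDist y A)

/-- `E` is a locally Ahlfors-regular Reifenberg-flat (LARRF) set of dimension `d`
with constants `ε` and `C₀` (Definition 15.1). -/
def IsLARRF (n d : ℕ) (ε C₀ : ℝ) (E : Set (V n)) : Prop :=
  E.Nonempty ∧ IsClosed E ∧
  ∀ x ∈ E, ∀ r : ℝ, 0 < r → r ≤ 1 →
    (∃ P : Set (V n), IsAffinePlane n d P ∧ x ∈ P ∧ nhd x r P E ≤ ε) ∧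
    ENNReal.ofReal (C₀⁻¹ * r ^ d) ≤ μH[(d : ℝ)] (E ∩ ball x r) ∧
    μH[(d : ℝ)] (E ∩ ball x r) ≤ ENNReal.ofReal (C₀ * r ^ d)


section Brouwer

open Filter Topology Polynomial

/-- The radial retraction of a normed space onto the closed ball of radius `ρ` about `0`. -/
def radialClip {E : Type*} [NormedAddCommGroup E] [NormedSpace ℝ E] (ρ : ℝ) (z : E) : E :=
  (ρ / max ρ ‖z‖) • z

section RadialClip

variable {E : Type*} [NormedAddCommGroup E] [NormedSpace ℝ E] {ρ : ℝ} {z : E}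

theorem radialClip_of_norm_le (hρ : 0 < ρ) (hz : ‖z‖ ≤ ρ) : radialClip ρ z = z := by
  rw [radialClip, max_eq_left hz, div_self hρ.ne', one_smul]

theorem radialClip_of_le_norm (hz : ρ ≤ ‖z‖) : radialClip ρ z = (ρ / ‖z‖) • z := by
  rw [radialClip, max_eq_right hz]

theorem norm_radialClip_of_le_norm (hρ : 0 < ρ) (hz : ρ ≤ ‖z‖) : ‖radialClip ρ z‖ = ρ := by
  have hz' : 0 < ‖z‖ := hρ.trans_le hz
  rw [radialClip_of_le_norm hz, norm_smul, Real.norm_of_nonneg (by positivity),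
    div_mul_cancel₀ _ hz'.ne']

theorem norm_radialClip_le (hρ : 0 < ρ) : ‖radialClip ρ z‖ ≤ ρ := by
  rcases le_total ‖z‖ ρ with h | h
  · rwa [radialClip_of_norm_le hρ h]
  · exact (norm_radialClip_of_le_norm hρ h).le

theorem lipschitzWith_radialClip (hρ : 0 < ρ) :
    LipschitzWith 2 (radialClip ρ : E → E) := by
  refine LipschitzWith.of_dist_le_mul fun z w => ?_
  rw [dist_eq_norm, dist_eq_norm]
  have hz : 0 < max ρ ‖z‖ := lt_max_of_lt_left hρ
  have hw : 0 < max ρ ‖w‖ := lt_max_of_lt_left hρ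
  have hab : |max ρ ‖w‖ - max ρ ‖z‖| ≤ ‖z - w‖ := by
    refine (abs_max_sub_max_le_max ρ ‖w‖ ρ ‖z‖).trans ?_
    rw [sub_self, abs_zero, max_eq_right (abs_nonneg _), abs_sub_comm]
    exact abs_norm_sub_norm_le z w
  have e : radialClip ρ z - radialClip ρ w
      = (ρ / max ρ ‖z‖) • (z - w)
        + ((ρ / max ρ ‖z‖) * (max ρ ‖w‖ - max ρ ‖z‖) / max ρ ‖w‖) • w := by
    rw [radialClip, radialClip, smul_sub, sub_add, ← sub_smul]
    congr 2
    field_simp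
    ring
  have h1 : ρ / max ρ ‖z‖ ≤ 1 := (div_le_one hz).2 (le_max_left _ _)
  have h2 : ‖w‖ / max ρ ‖w‖ ≤ 1 := (div_le_one hw).2 (le_max_right _ _)
  have h0 : 0 ≤ ρ / max ρ ‖z‖ := by positivity
  have h0' : 0 ≤ ‖w‖ / max ρ ‖w‖ := by positivity
  rw [e]
  refine (norm_add_le _ _).trans ?_
  rw [norm_smul, norm_smul, Real.norm_of_nonneg h0, norm_div, norm_mul, Real.norm_of_nonneg h0,
    Real.norm_of_nonneg hw.le, Real.norm_eq_abs]
  have h3 : ρ / max ρ ‖z‖ * |max ρ ‖w‖ - max ρ ‖z‖| / max ρ ‖w‖ * ‖w‖ ≤ ‖z - w‖ := by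
    calc _ = (ρ / max ρ ‖z‖) * (‖w‖ / max ρ ‖w‖) * |max ρ ‖w‖ - max ρ ‖z‖| := by ring
      _ ≤ 1 * |max ρ ‖w‖ - max ρ ‖z‖| := by
        gcongr
        exact mul_le_one₀ h1 h0' h2
      _ ≤ _ := by rwa [one_mul]
  have h4 : ρ / max ρ ‖z‖ * ‖z - w‖ ≤ ‖z - w‖ := mul_le_of_le_one_left (norm_nonneg _) h1
  push_cast
  linarith

end RadialClip

variable {E : Type*} [NormedAddCommGroup E] [InnerProductSpace ℝ E] [FiniteDimensional ℝ E]

theorem det_one_add_smul_pos {A : E →L[ℝ] E} {t : ℝ} (ht : 0 ≤ t) (htA : t * ‖A‖ < 1) :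
    0 < ((1 : E →L[ℝ] E) + t • A).det := by
  by_contra! hneg
  have hcont : Continuous fun s : ℝ => ((1 : E →L[ℝ] E) + s • A).det :=
    ContinuousLinearMap.continuous_det.comp (by fun_prop)
  have h1 : ((1 : E →L[ℝ] E) + (0 : ℝ) • A).det = 1 := by
    simp [ContinuousLinearMap.det]
  obtain ⟨s, ⟨hs0, hst⟩, hs⟩ := intermediate_value_Icc' ht hcont.continuousOn
    (show (0 : ℝ) ∈ Icc _ _ from ⟨hneg, by simp only [h1]; norm_num⟩)
  obtain ⟨v, hv, hv0⟩ := (Submodule.ne_bot_iff _).1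
    (LinearMap.bot_lt_ker_of_det_eq_zero (f := (((1 : E →L[ℝ] E) + s • A : E →L[ℝ] E) : E →ₗ[ℝ] E))
      hs).ne'
  have hv' : v + s • A v = 0 := by simpa using hv
  have : ‖v‖ ≤ s * ‖A‖ * ‖v‖ := by
    calc ‖v‖ = ‖s • A v‖ := by
          rw [← norm_neg (s • A v), ← eq_neg_of_add_eq_zero_left hv']
      _ = s * ‖A v‖ := by rw [norm_smul, Real.norm_of_nonneg hs0]
      _ ≤ s * (‖A‖ * ‖v‖) := by gcongr; exact A.le_opNorm v
      _ = _ := by ring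
  have hvp : 0 < ‖v‖ := norm_pos_iff.2 hv0
  have hsA : s * ‖A‖ ≤ t * ‖A‖ := by gcongr
  nlinarith

/-- `det (1 + t A)` is a polynomial of degree at most `dim E` in `t`. -/
theorem exists_polynomial_det_one_add_smul (A : E →L[ℝ] E) :
    ∃ p : ℝ[X], p.natDegree ≤ Module.finrank ℝ E ∧
      ∀ t : ℝ, p.eval t = ((1 : E →L[ℝ] E) + t • A).det := by
  let b := Module.finBasis ℝ E
  let M := LinearMap.toMatrix b b (A : E →ₗ[ℝ] E)
  refine ⟨Matrix.det ((X : ℝ[X]) • M.map C + (1 : Matrix _ _ ℝ).map C), ?_, fun t => ?_⟩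
  · simpa using natDegree_det_X_add_C_le M 1
  · have hM : LinearMap.toMatrix b b (((1 : E →L[ℝ] E) + t • A : E →L[ℝ] E) : E →ₗ[ℝ] E)
        = 1 + t • M := by
      simp [M, LinearMap.toMatrix_one]
    rw [ContinuousLinearMap.det, ← LinearMap.det_toMatrix b, hM, ← coe_evalRingHom,
      RingHom.map_det]
    congr 1
    ext i j
    rcases eq_or_ne i j with rfl | hij
    · simp [add_comm, mul_comm t]
    · simp [Matrix.one_apply_ne hij, mul_comm t]

theorem injective_and_image_ball_of_lipschitz_perturbation {g : E → E} {c : NNReal} {ρ : ℝ}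
    (hg : LipschitzWith c g) (hc : c < 1) (hg0 : ∀ x, ρ ≤ ‖x‖ → g x = 0) :
    Function.Injective (fun x => x + g x) ∧ (fun x => x + g x) '' ball 0 ρ = ball 0 ρ := by
  have happ : ApproximatesLinearOn (fun x => x + g x)
      ((ContinuousLinearEquiv.refl ℝ E : E ≃L[ℝ] E) : E →L[ℝ] E) univ c := by
    intro x _ y _
    have : x + g x - (y + g y) - (x - y) = g x - g y := by abel
    simpa [this] using hg.norm_sub_le x y
  have hcN : Subsingleton E ∨
      c < ‖((ContinuousLinearEquiv.refl ℝ E).symm : E →L[ℝ] E)‖₊⁻¹ := by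
    rcases subsingleton_or_nontrivial E with h | h
    · exact Or.inl h
    · right
      have : ‖((ContinuousLinearEquiv.refl ℝ E).symm : E →L[ℝ] E)‖₊ = 1 := by
        simp
      rw [this]
      simpa using hc
  have hinj : Function.Injective (fun x => x + g x) := by
    have := happ.injOn hcN
    rwa [injOn_univ] at this
  refine ⟨hinj, Subset.antisymm ?_ ?_⟩
  · rintro _ ⟨x, hx, rfl⟩
    by_contra hy
    simp only [mem_ball_zero_iff, not_lt] at hx hy
    have : x = x + g x := hinj (by simp only [hg0 _ hy, add_zero])
    rw [← this] at hy
    exact absurd hx (not_lt.2 hy)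
  · intro y hy
    obtain ⟨x, rfl⟩ := happ.surjective hcN y
    refine ⟨x, ?_, rfl⟩
    by_contra hx
    simp only [mem_ball_zero_iff, not_lt] at hx hy
    rw [hg0 x hx, add_zero] at hy
    exact absurd hy (not_lt.2 hx)

theorem det_fderiv_eq_zero_of_norm_const {u : E → E} {ρ : ℝ} (hρ : 0 < ρ)
    (hu : ∀ x, ‖u x‖ = ρ) {x : E} (hd : DifferentiableAt ℝ u x) : (fderiv ℝ u x).det = 0 := by
  by_contra hne
  have hsurj : LinearMap.range ((fderiv ℝ u x : E →L[ℝ] E) : E →ₗ[ℝ] E) = ⊤ :=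
    LinearMap.range_eq_top.2
      ((LinearMap.equivOfDetNeZero _ hne).surjective)
  obtain ⟨v, hv⟩ : ∃ v, fderiv ℝ u x v = u x := by
    have : u x ∈ LinearMap.range ((fderiv ℝ u x : E →L[ℝ] E) : E →ₗ[ℝ] E) := by
      rw [hsurj]; trivial
    simpa using this
  have h1 := hd.hasFDerivAt.inner ℝ hd.hasFDerivAt
  have h2 : (fun y => inner ℝ (u y) (u y)) = fun _ => ρ ^ 2 := by
    funext y
    rw [real_inner_self_eq_norm_sq, hu]
  rw [h2] at h1
  have h3 := congrArg (fun L : E →L[ℝ] ℝ => L v) (h1.unique (hasFDerivAt_const _ _))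
  simp [hv, hu] at h3
  exact hρ.ne' h3

/-- The integral of the Jacobian determinant of a `C¹` perturbation of the identity which is
the identity on the boundary of a ball is the volume of that ball. -/
theorem integral_det_one_add_fderiv [MeasurableSpace E] [BorelSpace E]
    {h : E → E} {ρ : ℝ} (hρ : 0 < ρ) (hh : ContDiff ℝ 1 h)
    (h0 : ∀ x, ‖x‖ = ρ → h x = 0) :
    ∫ x in ball (0 : E) ρ, ((1 : E →L[ℝ] E) + fderiv ℝ h x).det = volume.real (ball (0 : E) ρ) := by
  have hcf : Continuous (fderiv ℝ h) := hh.continuous_fderiv one_ne_zero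
  obtain ⟨K, hK⟩ := (isCompact_closedBall (0 : E) ρ).exists_bound_of_continuousOn
    hcf.continuousOn
  have hK0 : 0 ≤ K := (norm_nonneg _).trans (hK 0 (by simp [hρ.le]))
  lift K to NNReal using hK0
  have hlip : LipschitzOnWith K h (closedBall 0 ρ) :=
    (convex_closedBall 0 ρ).lipschitzOnWith_of_nnnorm_fderiv_le
      (fun x _ => hh.differentiable one_ne_zero x) fun x hx => by exact_mod_cast hK x hx
  have hglip : LipschitzWith (K * 2) (fun x => h (radialClip ρ x)) := by
    have := hlip.comp ((lipschitzWith_radialClip (E := E) hρ).lipschitzOnWith (s := univ))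
      (fun x _ => by simpa using norm_radialClip_le hρ)
    rwa [lipschitzOnWith_univ] at this
  have hsmall : ∀ t : ℝ, 0 < t → t * (K * 2) < 1 →
      ∫ x in ball (0 : E) ρ, ((1 : E →L[ℝ] E) + t • fderiv ℝ h x).det
        = volume.real (ball (0 : E) ρ) := by
    intro t ht htK
    lift t to NNReal using ht.le
    have hl : LipschitzWith (t * (K * 2)) (fun x => (t : ℝ) • h (radialClip ρ x)) := by
      refine LipschitzWith.of_dist_le_mul fun x y => ?_
      have := hglip.dist_le_mul x y
      rw [dist_smul₀]
      push_cast at this ⊢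
      rw [mul_assoc]
      simpa using mul_le_mul_of_nonneg_left this t.2
    obtain ⟨hinj, himg⟩ := injective_and_image_ball_of_lipschitz_perturbation (ρ := ρ) hl
      (by exact_mod_cast htK) (fun x hx => by
        rw [h0 _ (norm_radialClip_of_le_norm hρ hx), smul_zero])
    have hder : ∀ x ∈ ball (0 : E) ρ,
        HasFDerivWithinAt (fun x => x + (t : ℝ) • h (radialClip ρ x))
          ((1 : E →L[ℝ] E) + (t : ℝ) • fderiv ℝ h x) (ball 0 ρ) x := by
      intro x hx
      have h1 : HasFDerivAt (fun x => x + (t : ℝ) • h x)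
          ((1 : E →L[ℝ] E) + (t : ℝ) • fderiv ℝ h x) x :=
        (hasFDerivAt_id x).add ((hh.differentiable one_ne_zero x).hasFDerivAt.const_smul (t : ℝ))
      refine h1.hasFDerivWithinAt.congr' (fun y hy => ?_) hx
      rw [radialClip_of_norm_le hρ (mem_ball_zero_iff.1 hy).le]
    have key := integral_image_eq_integral_abs_det_fderiv_smul volume measurableSet_ball hder
      hinj.injOn (fun _ => (1 : ℝ))
    rw [himg] at key
    simp only [integral_const, smul_eq_mul, mul_one, measureReal_restrict_apply_univ] at key
    rw [key]
    refine setIntegral_congr_fun measurableSet_ball fun x hx => ?_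
    have hx' := hK x (ball_subset_closedBall hx)
    refine (abs_of_pos (det_one_add_smul_pos ht.le ?_)).symm
    refine lt_of_le_of_lt (mul_le_mul_of_nonneg_left hx' ht.le) ?_
    have : (0 : ℝ) ≤ t * K := by positivity
    linarith
  -- the integrand is a polynomial along the segment, so it is determined by its small nodes
  let N := Module.finrank ℝ E + 1
  let v : ℕ → ℝ := fun i => 1 / (2 * K + 2 + i)
  have hden : ∀ i : ℕ, (0 : ℝ) < 2 * K + 2 + i := fun i => by positivity
  have hv : Set.InjOn v (Finset.range N : Finset ℕ) := by
    intro i _ j _ hij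
    have hi := hden i
    have hj := hden j
    simp only [v] at hij
    rw [div_eq_div_iff hi.ne' hj.ne'] at hij
    have : (i : ℝ) = j := by linarith
    exact_mod_cast this
  have hinterp : ∀ x, ((1 : E →L[ℝ] E) + fderiv ℝ h x).det
      = ∑ i ∈ Finset.range N, ((1 : E →L[ℝ] E) + v i • fderiv ℝ h x).det
        * (Lagrange.basis (Finset.range N) v i).eval 1 := by
    intro x
    obtain ⟨p, hp, hpe⟩ := exists_polynomial_det_one_add_smul (fderiv ℝ h x)
    have hdeg : p.degree < (Finset.range N).card := by
      rw [Finset.card_range]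
      refine lt_of_le_of_lt degree_le_natDegree ?_
      exact_mod_cast Nat.lt_succ_of_le hp
    have := congrArg (eval 1) (Lagrange.eq_interpolate hv hdeg)
    rw [Lagrange.interpolate_apply, eval_finsetSum, hpe, one_smul] at this
    rw [this]
    refine Finset.sum_congr rfl fun i _ => ?_
    rw [eval_mul, eval_C, hpe]
  have hsum1 : ∑ i ∈ Finset.range N, (Lagrange.basis (Finset.range N) v i).eval 1 = (1 : ℝ) := by
    have := congrArg (eval 1) (Lagrange.sum_basis hv ⟨0, by simp [N]⟩)
    simpa [eval_finsetSum] using this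
  have hint : ∀ t : ℝ, IntegrableOn (fun x => ((1 : E →L[ℝ] E) + t • fderiv ℝ h x).det)
      (ball (0 : E) ρ) := by
    intro t
    have : Continuous (fun x => ((1 : E →L[ℝ] E) + t • fderiv ℝ h x).det) :=
      ContinuousLinearMap.continuous_det.comp (by fun_prop)
    exact (this.continuousOn.integrableOn_compact (isCompact_closedBall (0 : E) ρ)).mono_set
      ball_subset_closedBall
  simp_rw [hinterp]
  rw [integral_finsetSum _ fun i _ => (hint (v i)).mul_const _]
  simp_rw [integral_mul_const]
  have hvsmall : ∀ i, ∫ x in ball (0 : E) ρ, ((1 : E →L[ℝ] E) + v i • fderiv ℝ h x).det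
        = volume.real (ball (0 : E) ρ) := by
    intro i
    have hi := hden i
    refine hsmall _ (by positivity) ?_
    simp only [v]
    rw [one_div, inv_mul_lt_iff₀ hi]
    have : (0 : ℝ) ≤ i := by positivity
    linarith
  simp_rw [hvsmall]
  rw [← Finset.mul_sum, hsum1, mul_one]

/-- **Brouwer's fixed point theorem** for bounded continuous self-maps of a Euclidean space. -/
theorem exists_fixedPoint_of_bounded {φ : E → E} (hφ : Continuous φ) {R : ℝ}
    (hR : ∀ x, ‖φ x‖ ≤ R) : ∃ x, φ x = x := by
  borelize E
  by_contra! hne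
  have hR0 : 0 ≤ R := (norm_nonneg _).trans (hR 0)
  set ρ := R + 1 with hρdef
  have hρ : 0 < ρ := by linarith
  let χ : E → ℝ := fun x => max 0 (min 1 (ρ - ‖x‖))
  have hχ1 : ∀ x, ‖x‖ ≤ R → χ x = 1 := fun x hx => by
    have : (1 : ℝ) ≤ ρ - ‖x‖ := by linarith
    simp [χ, min_eq_left this]
  have hχ0 : ∀ x, ρ ≤ ‖x‖ → χ x = 0 := fun x hx => by
    have : min 1 (ρ - ‖x‖) ≤ 0 := (min_le_right _ _).trans (by linarith)
    simp [χ, max_eq_left this]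
  have hχle : ∀ x, |χ x| ≤ 1 := fun x => by
    rw [abs_of_nonneg (le_max_left _ _)]
    exact max_le zero_le_one (min_le_left _ _)
  have hχc : Continuous χ := by fun_prop
  have hne' : ∀ x, χ x • φ x ≠ x := by
    intro x hx
    have hxR : ‖x‖ ≤ R := by
      rw [← hx, norm_smul, Real.norm_eq_abs]
      exact (mul_le_of_le_one_left (norm_nonneg _) (hχle x)).trans (hR x)
    rw [hχ1 x hxR, one_smul] at hx
    exact hne x hx
  obtain ⟨ψ, hψ, hψd, hψs⟩ := Continuous.exists_contDiff_approx 1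
    (f := fun x => χ x • φ x) (ε := fun x => ‖x - χ x • φ x‖) (by fun_prop) (by fun_prop)
    (fun x => norm_pos_iff.2 (sub_ne_zero.2 (hne' x).symm))
  have hψne : ∀ x, x - ψ x ≠ 0 := by
    intro x hx
    have := hψd x
    rw [← sub_eq_zero.1 hx, dist_eq_norm] at this
    exact lt_irrefl _ this
  have hψ0 : ∀ x, ρ ≤ ‖x‖ → ψ x = 0 := by
    intro x hx
    by_contra hn
    have := hψs (Function.mem_support.2 hn)
    simp [hχ0 x hx] at this
  let u : E → E := fun x => (ρ * ‖x - ψ x‖⁻¹) • (x - ψ x)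
  have hψ' : ContDiff ℝ 1 fun x => x - ψ x := contDiff_id.sub hψ
  have hu : ContDiff ℝ 1 u :=
    (contDiff_const.mul ((hψ'.norm ℝ hψne).inv fun x => norm_ne_zero_iff.2 (hψne x))).smul hψ'
  have hun : ∀ x, ‖u x‖ = ρ := by
    intro x
    have : 0 < ‖x - ψ x‖ := norm_pos_iff.2 (hψne x)
    simp only [u]
    rw [norm_smul, Real.norm_of_nonneg (by positivity), mul_assoc, inv_mul_cancel₀ this.ne',
      mul_one]
  have hmain := integral_det_one_add_fderiv (h := fun x => u x - x) hρ (hu.sub contDiff_id)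
    (fun x hx => by
      simp only [u, hψ0 x hx.ge, sub_zero, hx]
      rw [mul_inv_cancel₀ hρ.ne', one_smul, sub_self])
  have hz : ∀ x, ((1 : E →L[ℝ] E) + fderiv ℝ (fun x => u x - x) x).det = 0 := by
    intro x
    have hd : DifferentiableAt ℝ u x := hu.differentiable one_ne_zero x
    have e : fderiv ℝ (fun x => u x - x) x = fderiv ℝ u x - 1 :=
      (hd.hasFDerivAt.sub (hasFDerivAt_id x)).fderiv
    rw [e, add_sub_cancel]
    exact det_fderiv_eq_zero_of_norm_const hρ hun hd
  simp_rw [hz] at hmain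
  rw [integral_zero] at hmain
  have hpos : 0 < volume.real (ball (0 : E) ρ) :=
    ENNReal.toReal_pos (measure_ball_pos volume _ hρ).ne' measure_ball_lt_top.ne
  exact hpos.ne hmain

end Brouwer

section Flatness

variable {n d : ℕ} {ε C₀ : ℝ} {E : Set (V n)}

theorem infDist_le_of_nhd_le {x y : V n} {r : ℝ} {A B : Set (V n)} (hr : 0 < r) (hB : x ∈ B)
    (hy : y ∈ A) (hyx : dist y x < r)
    (h : r⁻¹ * (⨆ y ∈ A ∩ ball x r, infDist y B) ≤ ε) : infDist y B ≤ ε * r := by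
  have hbdd : BddAbove (range fun y => ⨆ _ : y ∈ A ∩ ball x r, infDist y B) := by
    refine ⟨r, ?_⟩
    rintro _ ⟨z, rfl⟩
    exact Real.iSup_le (fun hz => (infDist_le_dist_of_mem hB).trans (mem_ball.1 hz.2).le) hr.le
  have hle : infDist y B ≤ ⨆ y ∈ A ∩ ball x r, infDist y B := by
    have := le_ciSup hbdd y
    rwa [ciSup_pos (show y ∈ A ∩ ball x r from ⟨hy, hyx⟩)] at this
  rw [inv_mul_le_iff₀ hr] at h
  linarith

/-- `E` is `ε`-close to a `d`-plane at every point and every scale up to `1`. -/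
def IsFlat (d : ℕ) (ε : ℝ) (E : Set (V n)) : Prop :=
  ∀ x ∈ E, ∀ r : ℝ, 0 < r → r ≤ 1 → ∃ Q : AffineSubspace ℝ (V n),
    Module.finrank ℝ Q.direction = d ∧ x ∈ Q ∧
    (∀ y ∈ Q, dist y x < r → infDist y E ≤ ε * r) ∧
    ∀ y ∈ E, dist y x < r → infDist y (Q : Set (V n)) ≤ ε * r

theorem IsLARRF.isFlat (hE : IsLARRF n d ε C₀ E) : IsFlat d ε E := by
  intro x hx r hr hr1
  obtain ⟨⟨_, ⟨Q, rfl, hQd, -⟩, hxQ, hnhd⟩, -⟩ := hE.2.2 x hx r hr hr1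
  have hr' : 0 ≤ r⁻¹ := by positivity
  refine ⟨Q, hQd, hxQ, fun y hy hyx => ?_, fun y hy hyx => ?_⟩
  · exact infDist_le_of_nhd_le hr hx hy hyx
      ((mul_le_mul_of_nonneg_left (le_max_left _ _) hr').trans hnhd)
  · exact infDist_le_of_nhd_le hr hxQ hy hyx
      ((mul_le_mul_of_nonneg_left (le_max_right _ _) hr').trans hnhd)

/-- Convex combinations of nearby points of a flat set stay close to the set. -/
theorem IsFlat.infDist_lt_of_mem_convexHull (hE : IsFlat d ε E) (hε : ε ≤ 1 / 100) {s : ℝ}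
    (hs : 0 < s) (hs1 : s ≤ 1 / 100) {z c : V n} (hc : c ∈ convexHull ℝ (E ∩ ball z (2 * s))) :
    infDist c E < s / 2 := by
  obtain ⟨e, heE, hez⟩ := convexHull_nonempty_iff.1 ⟨c, hc⟩
  obtain ⟨Q, -, heQ, hQE, hEQ⟩ := hE e heE (5 * s) (by linarith) (by linarith)
  have hεs : ε * (5 * s) ≤ s / 20 := by nlinarith
  have hsub : E ∩ ball z (2 * s) ⊆ Metric.thickening (s / 10) (Q : Set (V n)) ∩ ball e (4 * s) := by
    rintro y ⟨hyE, hyz⟩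
    have hye : dist y e < 4 * s := by
      have := dist_triangle_right y e z
      rw [mem_ball] at hyz hez
      linarith
    refine ⟨?_, hye⟩
    rw [mem_thickening_iff]
    exact (infDist_lt_iff ⟨e, heQ⟩).1 (lt_of_le_of_lt (hEQ y hyE (by linarith)) (by linarith))
  obtain ⟨hcQ, hce⟩ := convexHull_min hsub ((Q.convex.thickening _).inter (convex_ball _ _)) hc
  obtain ⟨q, hqQ, hcq⟩ := mem_thickening_iff.1 hcQ
  rw [mem_ball] at hce
  have hqe : dist q e < 5 * s := by
    have := dist_triangle_left q e c
    linarith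
  have h1 := hQE q hqQ hqe
  have h2 := infDist_le_infDist_add_dist (s := E) (x := c) (y := q)
  linarith

/-- A continuous map close to a flat set can be moved slightly so as to come twice as close. -/
theorem IsFlat.exists_improvement {X : Type*} [TopologicalSpace X] [NormalSpace X]
    [ParacompactSpace X] (hE : IsFlat d ε E) (hne : E.Nonempty) (hε : ε ≤ 1 / 100) {s : ℝ}
    (hs : 0 < s) (hs1 : s ≤ 1 / 100) (g : C(X, V n)) (hg : ∀ y, infDist (g y) E < s) :
    ∃ g' : C(X, V n), ∀ y, dist (g' y) (g y) ≤ 2 * s ∧ infDist (g' y) E < s / 2 := by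
  obtain ⟨g', hg'⟩ := exists_continuous_forall_mem_convex_of_local_const
    (t := fun y => convexHull ℝ (E ∩ ball (g y) (2 * s))) (fun y => convex_convexHull ℝ _)
    (fun y => by
      obtain ⟨c, hcE, hc⟩ := (infDist_lt_iff hne).1 (hg y)
      refine ⟨c, ?_⟩
      filter_upwards [g.continuous.continuousAt.eventually (ball_mem_nhds (g y) hs)] with w hw
      refine subset_convexHull ℝ _ ⟨hcE, ?_⟩
      rw [mem_ball]
      have := dist_triangle c (g y) (g w)
      rw [dist_comm c (g y), dist_comm (g y) (g w)] at this
      linarith)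
  refine ⟨g', fun y => ⟨?_, hE.infDist_lt_of_mem_convexHull hε hs hs1 (hg' y)⟩⟩
  exact (mem_ball.1 (convexHull_min inter_subset_right (convex_ball _ _) (hg' y))).le

theorem IsFlat.exists_approximation {X : Type*} [TopologicalSpace X] [NormalSpace X]
    [ParacompactSpace X] (hE : IsFlat d ε E) (hne : E.Nonempty) (hε : ε ≤ 1 / 100) (k : ℕ) :
    ∀ {s : ℝ}, 0 < s → s ≤ 1 / 100 → ∀ g : C(X, V n), (∀ y, infDist (g y) E < s) →
    ∃ g' : C(X, V n), ∀ y, dist (g' y) (g y) ≤ 4 * s ∧ infDist (g' y) E < s / 2 ^ k := by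
  induction k with
  | zero => exact fun hs _ g hg => ⟨g, fun y => ⟨by rw [dist_self]; linarith, by simpa using hg y⟩⟩
  | succ k ih =>
    intro s hs hs1 g hg
    obtain ⟨g₁, hg₁⟩ := hE.exists_improvement hne hε hs hs1 g hg
    obtain ⟨g₂, hg₂⟩ := ih (half_pos hs) (by linarith) g₁ fun y => (hg₁ y).2
    refine ⟨g₂, fun y => ⟨?_, ?_⟩⟩
    · have := dist_triangle (g₂ y) (g₁ y) (g y)
      linarith [(hg₁ y).1, (hg₂ y).1]
    · have := (hg₂ y).2
      rwa [div_div, ← pow_succ'] at this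

end Flatness

section Linking

variable {n : ℕ}

theorem exists_pos_forall_infDist_lt_notMem {F : ℝ × V n → V n} {A : Set ℝ} {T E : Set (V n)}
    (hA : IsCompact A) (hF : ContinuousOn F (A ×ˢ univ)) (hT : IsClosed T) (hE : IsClosed E)
    (hne : E.Nonempty) (h : ∀ z ∈ E, ∀ t ∈ A, F (t, z) ∉ T) (x : V n) (R : ℝ) :
    ∃ δ > 0, ∀ z ∈ closedBall x R, infDist z E < δ → ∀ t ∈ A, F (t, z) ∉ T := by
  have hK : IsCompact (A ×ˢ closedBall x R) := hA.prod (isCompact_closedBall x R)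
  have hFK : ContinuousOn F (A ×ˢ closedBall x R) := hF.mono (prod_mono_right (subset_univ _))
  have hbad : IsCompact (Prod.snd '' ((A ×ˢ closedBall x R) ∩ F ⁻¹' T)) :=
    (hK.of_isClosed_subset (hFK.preimage_isClosed_of_isClosed hK.isClosed hT)
      inter_subset_left).image continuous_snd
  rcases (Prod.snd '' ((A ×ˢ closedBall x R) ∩ F ⁻¹' T)).eq_empty_or_nonempty with h0 | h0
  · refine ⟨1, one_pos, fun z hz _ t ht hzt => ?_⟩
    have : z ∈ Prod.snd '' ((A ×ˢ closedBall x R) ∩ F ⁻¹' T) := ⟨(t, z), ⟨⟨ht, hz⟩, hzt⟩, rfl⟩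
    rw [h0] at this
    exact this
  · obtain ⟨_, ⟨⟨t, w⟩, ⟨⟨ht, -⟩, hwT⟩, rfl⟩, hmin⟩ :=
      hbad.exists_isMinOn h0 (continuous_infDist_pt E).continuousOn
    refine ⟨infDist w E, (hE.notMem_iff_infDist_pos hne).1 fun hw => h w hw t ht hwT, ?_⟩
    intro z hz hlt t' ht' hzt
    exact absurd hlt (not_lt.2 (hmin ⟨(t', z), ⟨⟨ht', hz⟩, hzt⟩, rfl⟩))

theorem norm_le_norm_add_of_mem_orthogonal {K : Submodule ℝ (V n)} {a b : V n} (ha : a ∈ K)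
    (hb : b ∈ Kᗮ) : ‖a‖ ≤ ‖a + b‖ ∧ ‖b‖ ≤ ‖a + b‖ := by
  have h := norm_add_sq_eq_norm_sq_add_norm_sq_real (K.inner_right_of_mem_orthogonal ha hb)
  constructor <;> nlinarith [norm_nonneg a, norm_nonneg b, norm_nonneg (a + b)]

theorem radialClip_mem {K : Submodule ℝ (V n)} {ρ : ℝ} {a : V n} (ha : a ∈ K) :
    radialClip ρ a ∈ K := K.smul_mem _ ha

/-- If a set is arbitrarily well approximated by continuous images of a large disk of the plane
`x + K`, no deformation supported in `ball x (10 * r)` pushes it out of that ball without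
crossing the sphere of radius `r / 2` in `x + Kᗮ`. -/
theorem not_exists_deformation {x : V n} {r : ℝ} (hr : 0 < r) (K : Submodule ℝ (V n))
    {E : Set (V n)} (hEc : IsClosed E) (hne : E.Nonempty)
    (happrox : ∀ δ > 0, ∃ g : C(V n, V n), ∀ u,
      dist (g u) (x + radialClip (15 * r) (K.starProjection u)) ≤ r / 250 ∧ infDist (g u) E < δ)
    {F : ℝ × V n → V n} (hF : ContinuousOn F (Icc (0 : ℝ) 1 ×ˢ univ))
    (hF0 : ∀ z, F (0, z) = z)
    (hFout : ∀ t ∈ Icc (0 : ℝ) 1, ∀ z, z ∉ ball x (10 * r) → F (t, z) = z)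
    (hF1 : ∀ z ∈ E, F (1, z) ∉ ball x (10 * r))
    (hFS : ∀ z ∈ E, ∀ t ∈ Icc (0 : ℝ) 1, F (t, z) ∉ {z | z - x ∈ Kᗮ} ∩ sphere x (r / 2)) :
    False := by
  have hSc : IsClosed ({z | z - x ∈ Kᗮ} ∩ sphere x (r / 2)) :=
    (K.isClosed_orthogonal.preimage (continuous_sub_right x)).inter isClosed_sphere
  obtain ⟨δ₁, hδ₁, hδS⟩ := exists_pos_forall_infDist_lt_notMem isCompact_Icc hF hSc hEc hne hFS
    x (16 * r)
  obtain ⟨δ₂, hδ₂, hδ1⟩ := exists_pos_forall_infDist_lt_notMem (A := {1}) isCompact_singleton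
    (hF.mono (prod_mono_left (by simp))) (isClosed_closedBall (x := x) (ε := r / 2)) hEc hne
    (fun z hz t ht hzt => by
      rw [mem_singleton_iff.1 ht] at hzt
      exact hF1 z hz (closedBall_subset_ball (by linarith) hzt)) x (16 * r)
  obtain ⟨g, hg⟩ := happrox (min δ₁ δ₂) (lt_min hδ₁ hδ₂)
  have h15 : 0 < 15 * r := by linarith
  have hr2 : 0 < r / 2 := by linarith
  let p : V n → V n := fun u => K.starProjection u
  let q : V n → V n := fun u => u - p u
  have hp : ∀ u, p u ∈ K := fun u => K.starProjection_apply_mem u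
  have hq : ∀ u, q u ∈ Kᗮ := fun u => K.sub_starProjection_mem_orthogonal u
  have hpc : Continuous p := K.starProjection.continuous
  have hqc : Continuous q := continuous_id.sub hpc
  have hclip : ∀ ρ : ℝ, 0 < ρ → Continuous (radialClip ρ : V n → V n) :=
    fun ρ hρ => (lipschitzWith_radialClip hρ).continuous
  let τ : V n → ℝ := fun u => max 0 (min 1 (2 - 2 * ‖q u‖ / r))
  have hτc : Continuous τ := by fun_prop
  have hτI : ∀ u, τ u ∈ Icc (0 : ℝ) 1 := fun u =>
    ⟨le_max_left _ _, max_le zero_le_one (min_le_left _ _)⟩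
  have hgball : ∀ u, g u ∈ closedBall x (16 * r) := by
    intro u
    have h1 := dist_triangle (g u) (x + radialClip (15 * r) (p u)) x
    have h2 : dist (x + radialClip (15 * r) (p u)) x ≤ 15 * r := by
      rw [dist_eq_norm, add_sub_cancel_left]
      exact norm_radialClip_le h15
    rw [mem_closedBall]
    linarith [(hg u).1]
  have hFgc : Continuous fun u => F (τ u, g u) :=
    hF.comp_continuous (hτc.prodMk g.continuous) fun u => ⟨hτI u, mem_univ _⟩
  obtain ⟨M, hM⟩ := (isCompact_Icc.prod
    (isCompact_closedBall x (16 * r))).exists_bound_of_continuousOn (hF.mono (prod_mono_right (subset_univ _)))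
  obtain ⟨u, hu⟩ := exists_fixedPoint_of_bounded (R := ‖x‖ + 15 * r + r + r / 2 + M)
    (φ := fun u => x + radialClip (15 * r) (p u) + radialClip r (q u) - radialClip (r / 2) (q u)
      - F (τ u, g u))
    (((((continuous_const.add ((hclip _ h15).comp hpc)).add ((hclip _ hr).comp hqc)).sub
      ((hclip _ hr2).comp hqc))).sub hFgc)
    (fun u => by
      refine (norm_sub_le _ _).trans (add_le_add ?_ (hM _ ⟨hτI u, hgball u⟩))
      refine (norm_sub_le _ _).trans (add_le_add ?_ (norm_radialClip_le hr2))
      refine (norm_add_le _ _).trans (add_le_add ?_ (norm_radialClip_le hr))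
      exact (norm_add_le _ _).trans (add_le_add le_rfl (norm_radialClip_le h15)))
  have hpq : u = p u + q u := (add_sub_cancel _ _).symm
  set y := radialClip (15 * r) (p u) with hy
  have hyK : y ∈ K := radialClip_mem (hp u)
  set w := (q u - radialClip r (q u)) + radialClip (r / 2) (q u) with hw
  have hwK : w ∈ Kᗮ :=
    add_mem (sub_mem (hq u) (radialClip_mem (hq u))) (radialClip_mem (hq u))
  have hFu : F (τ u, g u) = x + (y - p u) - w := by
    have h1 : F (τ u, g u) = x + y + radialClip r (q u) - radialClip (r / 2) (q u) - u :=
      (sub_eq_iff_eq_add'.1 hu).symm ▸ by simp only [add_sub_cancel_right]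
    have h2 : x + y + radialClip r (q u) - radialClip (r / 2) (q u) - u
        = x + y + radialClip r (q u) - radialClip (r / 2) (q u) - (p u + q u) := by rw [← hpq]
    rw [h1, h2, hw]
    abel
  have hgu : ‖g u - (x + y)‖ ≤ r / 250 := by simpa [dist_eq_norm] using (hg u).1
  -- a point left in place by the deformation is too close to the disk
  have hfix : F (τ u, g u) = g u → ‖p u‖ ≤ r / 250 ∧ ‖w‖ ≤ r / 250 := by
    intro h
    have e : g u - (x + y) = -(p u + w) := by
      rw [← h, hFu]
      abel
    rw [e, norm_neg] at hgu
    have := norm_le_norm_add_of_mem_orthogonal (hp u) hwK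
    exact ⟨this.1.trans hgu, this.2.trans hgu⟩
  rcases le_total (15 * r) ‖p u‖ with h1 | h1
  · have hyn : ‖y‖ = 15 * r := norm_radialClip_of_le_norm h15 h1
    have hout : g u ∉ ball x (10 * r) := by
      rw [mem_ball, dist_eq_norm, not_lt]
      have e : y = (g u - x) - (g u - (x + y)) := by abel
      have := norm_sub_le (g u - x) (g u - (x + y))
      rw [← e, hyn] at this
      linarith
    have := (hfix (hFout _ (hτI u) _ hout)).1
    linarith
  have hyp : y = p u := radialClip_of_norm_le h15 h1
  rcases le_total r ‖q u‖ with h2 | h2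
  · have hτ0 : τ u = 0 := by
      have : 2 ≤ 2 * ‖q u‖ / r := by
        rw [le_div_iff₀ hr]
        linarith
      exact max_eq_left ((min_le_right _ _).trans (by linarith))
    have h3 := (hfix (by rw [hτ0, hF0])).2
    have h4 : ‖w‖ = ‖q u‖ - r / 2 := by
      have hqp : 0 < ‖q u‖ := hr.trans_le h2
      have e : w = (1 - r / 2 / ‖q u‖) • q u := by
        rw [hw, radialClip_of_le_norm h2, radialClip_of_le_norm (by linarith)]
        module
      have h5 : 0 ≤ 1 - r / 2 / ‖q u‖ := by
        rw [sub_nonneg, div_le_one hqp]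
        linarith
      rw [e, norm_smul, Real.norm_of_nonneg h5]
      field_simp
    linarith
  have hw2 : w = radialClip (r / 2) (q u) := by
    rw [hw, radialClip_of_norm_le hr h2, sub_self, zero_add]
  have hFx : F (τ u, g u) - x = -w := by
    rw [hFu, hyp]
    abel
  rcases le_total (r / 2) ‖q u‖ with h3 | h3
  · refine hδS _ (hgball u) ((hg u).2.trans_le (min_le_left _ _)) _ (hτI u) ⟨?_, ?_⟩
    · simpa only [mem_ofPred_eq, hFx] using neg_mem hwK
    · rw [mem_sphere, dist_eq_norm, hFx, norm_neg, hw2, norm_radialClip_of_le_norm hr2 h3]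
  · have hτ1 : τ u = 1 := by
      have : 2 * ‖q u‖ / r ≤ 1 := by
        rw [div_le_one hr]
        linarith
      have h4 : min 1 (2 - 2 * ‖q u‖ / r) = 1 := min_eq_left (by linarith)
      simp only [τ, h4, max_eq_right zero_le_one]
    refine hδ1 _ (hgball u) ((hg u).2.trans_le (min_le_right _ _)) 1 rfl ?_
    rw [← hτ1, mem_closedBall, dist_eq_norm, hFx, norm_neg, hw2]
    exact norm_radialClip_le hr2

end Linking

/-- **Lemma 15.6**: a LARRF set is a local generalized Semmes surface: for
`x ∈ E` and `0 < r ≤ 10⁻²` there is an `(n−d)`-plane `W` through `x` such that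
the sphere `S = W ∩ ∂B(x,r/2)` stays at distance `≥ r/3` from `E` and is linked
with `E`: no continuous homotopy `F` on `[0,1] × ℝⁿ` can push `E` out of
`B(x,10r)` while fixing the points outside `B(x,10r)` and avoiding `S`. -/
theorem lem_15_6 (n d : ℕ) (hd : 0 < d) (hdn : d < n) :
    ∃ ε₀ : ℝ, 0 < ε₀ ∧
    ∀ C₀ : ℝ, 1 ≤ C₀ →
    ∀ ε : ℝ, 0 < ε → ε ≤ ε₀ →
    ∀ E : Set (V n), IsLARRF n d ε C₀ E →
    ∀ x ∈ E, ∀ r : ℝ, 0 < r → r ≤ (100 : ℝ)⁻¹ →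
    ∃ W : Set (V n), IsAffinePlane n (n - d) W ∧ x ∈ W ∧
      (∀ z ∈ W ∩ sphere x (r / 2), r / 3 ≤ infDist z E) ∧
      ¬ ∃ F : ℝ × V n → V n,
          ContinuousOn F (Set.Icc (0 : ℝ) 1 ×ˢ (Set.univ : Set (V n))) ∧
          (∀ z : V n, F (0, z) = z) ∧
          (∀ t ∈ Set.Icc (0 : ℝ) 1, ∀ z : V n, z ∉ ball x (10 * r) → F (t, z) = z) ∧
          (∀ z ∈ E, F (1, z) ∉ ball x (10 * r)) ∧
          (∀ z ∈ E, ∀ t ∈ Set.Icc (0 : ℝ) 1, F (t, z) ∉ W ∩ sphere x (r / 2)) := by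
  refine ⟨1 / 100000, by norm_num, fun C₀ _ ε hε hε₀ E hE x hx r hr hr1 => ?_⟩
  have hr100 : r ≤ 1 / 100 := by simpa using hr1
  have hflat : IsFlat d ε E := hE.isFlat
  obtain ⟨Q, hQd, hxQ, hQE, hEQ⟩ := hflat x hx (20 * r) (by linarith) (by linarith)
  have hεr : ε * (20 * r) ≤ r / 5000 := by nlinarith
  set K := Q.direction with hK
  have hW : (AffineSubspace.mk' x Kᗮ : Set (V n)) = {z | z - x ∈ Kᗮ} := by
    ext z
    simp [AffineSubspace.mem_mk']
  refine ⟨{z | z - x ∈ Kᗮ}, ⟨AffineSubspace.mk' x Kᗮ, hW, ?_, ⟨x, AffineSubspace.self_mem_mk' _ _⟩⟩,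
    by simp, ?_, ?_⟩
  · have := K.finrank_add_finrank_orthogonal
    rw [hQd, finrank_euclideanSpace_fin] at this
    rw [AffineSubspace.direction_mk']
    omega
  · rintro z ⟨hzW, hzS⟩
    rw [mem_sphere] at hzS
    refine (le_infDist ⟨x, hx⟩).2 fun e he => ?_
    rcases lt_or_ge (dist e x) (20 * r) with h | h
    · have h1 : infDist e (Q : Set (V n)) < r / 1000 := by linarith [hEQ e he h]
      obtain ⟨y, hyQ, hey⟩ := (infDist_lt_iff ⟨x, hxQ⟩).1 h1
      have hyx : x - y ∈ K := AffineSubspace.vsub_mem_direction hxQ hyQ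
      have h2 := (norm_le_norm_add_of_mem_orthogonal hyx hzW).2
      rw [← dist_eq_norm, hzS, sub_add_sub_comm, add_comm x z, add_sub_add_right_eq_sub,
        ← dist_eq_norm] at h2
      have := dist_triangle z e y
      linarith
    · have := dist_triangle_left e x z
      linarith
  · rintro ⟨F, hFc, hF0, hFout, hF1, hFS⟩
    refine not_exists_deformation hr K hE.2.1 hE.1 (fun δ hδ => ?_) hFc hF0 hFout hF1 hFS
    obtain ⟨k, hk⟩ := pow_unbounded_of_one_lt (r / 1000 / δ) (one_lt_two)
    have h15 : 0 < 15 * r := by linarith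
    let g₀ : C(V n, V n) := ⟨fun u => x + radialClip (15 * r) (K.starProjection u),
      continuous_const.add ((lipschitzWith_radialClip h15).continuous.comp
        K.starProjection.continuous)⟩
    obtain ⟨g, hg⟩ := hflat.exists_approximation hE.1 (by linarith) k (s := r / 1000)
      (by linarith) (by linarith) g₀ (fun u => by
        have hmem : x + radialClip (15 * r) (K.starProjection u) ∈ Q := by
          rw [add_comm]
          exact AffineSubspace.vadd_mem_of_mem_direction
            (radialClip_mem (K.starProjection_apply_mem u)) hxQ
        have hd : dist (x + radialClip (15 * r) (K.starProjection u)) x < 20 * r := by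
          rw [dist_eq_norm, add_sub_cancel_left]
          exact (norm_radialClip_le h15).trans_lt (by linarith)
        have := hQE _ hmem hd
        exact this.trans_lt (by linarith))
    refine ⟨g, fun u => ⟨(hg u).1.trans (by linarith), (hg u).2.trans ?_⟩⟩
    rw [div_lt_iff₀ hδ] at hk
    rw [div_lt_iff₀ (by positivity)]
    linarith
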